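/- Let G be a finite connected simple graph with nonnegative edge weights, and for vertices u, v let d(u,v) denote the minimum total weight of a walk in G from u to v. Let T be a nonempty set of terminal vertices of G. Then for every connected subgraph H of G whose vertex set contains T, there exists a spanning tree of the complete graph on the vertex set T whose total weight under d is at most 2 times the total edge weight of H. In particular, the minimum spanning tree of the auxiliary complete graph on the terminals, weighted by shortest-path distances, has d-weight at most twice the weight of an optimal Steiner subgraph for T. -/

import Mathlib

/-!
Double every edge of `H` to get a walk visiting all of `H`, then shortcut it past the
non-terminals.

`exists_covering_walk` produces the walk: a set of visited vertices is grown one vertex at a time,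
each new vertex `v` being reached from an already visited `u` by a detour `u → v → u`. Each detour
uses an edge not used before, so the walk weighs at most twice the edges of `H`.

`exists_shortcut_edges` cuts the walk at its visits to `T`: the consecutive pairs of terminals form
a connected graph on `T`, and by the triangle inequality its `D`-weight is at most the weight of the
walk. Any spanning tree of that graph is then light enough because `D` is nonnegative.
-/

/-- The walk repeats vertices freely; `F` records the edges of `H` already paid for, all of which
lie inside the set `S` of vertices reached so far. -/
lemma exists_covering_walk_aux {V : Type*} [Finite V] {G : SimpleGraph V}
    (w : Sym2 V → ℝ) (H : G.Subgraph) (hH : H.Connected) (a : V) (ha : a ∈ H.verts) (n : ℕ) :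
    ∃ (S : Set V) (F : Finset (Sym2 V)) (b : V) (q : G.Walk a b),
      a ∈ S ∧ S ⊆ H.verts ∧ (↑F ⊆ H.edgeSet) ∧ (∀ e ∈ F, ∀ x ∈ e, x ∈ S) ∧
      (∀ x ∈ S, x ∈ q.support) ∧ (q.edges.map w).sum ≤ 2 * ∑ e ∈ F, w e ∧
      (n ≤ S.ncard ∨ S = H.verts) := by
  classical
  induction n with
  | zero =>
    exact ⟨{a}, ∅, a, .nil, by simp, by simpa using ha, by simp, by simp, by simp, by simp,
      by simp⟩
  | succ n ih =>
    obtain ⟨S, F, b, q, haS, hSH, hFH, hFS, hSq, hqw, hn⟩ := ih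
    by_cases hS : S = H.verts
    · exact ⟨S, F, b, q, haS, hSH, hFH, hFS, hSq, hqw, Or.inr hS⟩
    replace hn : n ≤ S.ncard := hn.resolve_right hS
    obtain ⟨y, hyH, hyS⟩ : ∃ y ∈ H.verts, y ∉ S := by
      by_contra! h
      exact hS (hSH.antisymm h)
    obtain ⟨p⟩ := hH.coe.preconnected ⟨a, ha⟩ ⟨y, hyH⟩
    obtain ⟨d, -, hd1, hd2⟩ := p.exists_boundary_dart (Subtype.val ⁻¹' S) haS hyS
    obtain ⟨u, v, huv, hu, hv⟩ : ∃ u v, H.Adj u v ∧ u ∈ S ∧ v ∉ S :=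
      ⟨d.fst, d.snd, d.adj, hd1, hd2⟩
    have hnot : s(u, v) ∉ F := fun h => hv (hFS _ h v (by simp))
    have huq := hSq u hu
    have hsplit : (q.edges.map w).sum =
        ((q.takeUntil u huq).edges.map w).sum + ((q.dropUntil u huq).edges.map w).sum := by
      conv_lhs => rw [← q.take_spec huq]
      rw [SimpleGraph.Walk.edges_append, List.map_append, List.sum_append]
    refine ⟨insert v S, insert s(u, v) F, b, (q.takeUntil u huq).append
      (.cons huv.adj_sub (.cons huv.adj_sub.symm (q.dropUntil u huq))), ?_, ?_, ?_, ?_, ?_, ?_, ?_⟩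
    · exact Or.inr haS
    · exact Set.insert_subset huv.snd_mem hSH
    · rw [Finset.coe_insert]
      exact Set.insert_subset huv hFH
    · intro e he x hx
      rcases Finset.mem_insert.1 he with rfl | he
      · rcases Sym2.mem_iff.1 hx with rfl | rfl
        · exact Or.inr hu
        · exact Or.inl rfl
      · exact Or.inr (hFS e he x hx)
    · intro x hx
      rcases hx with rfl | hx
      · simp [SimpleGraph.Walk.mem_support_append_iff]
      · have h := hSq x hx
        rw [← q.take_spec huq, SimpleGraph.Walk.mem_support_append_iff] at h
        simp only [SimpleGraph.Walk.mem_support_append_iff, SimpleGraph.Walk.support_cons,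
          List.mem_cons]
        tauto
    · rw [Finset.sum_insert hnot]
      simp only [SimpleGraph.Walk.edges_append, SimpleGraph.Walk.edges_cons, List.map_append,
        List.map_cons, List.sum_append, List.sum_cons, Sym2.eq_swap (a := v) (b := u)]
      linarith
    · left
      rw [Set.ncard_insert_of_notMem hv]
      lia

lemma exists_covering_walk {V : Type*} [Finite V] {G : SimpleGraph V}
    (w : Sym2 V → ℝ) (hw : ∀ e ∈ G.edgeSet, 0 ≤ w e)
    (H : G.Subgraph) (hH : H.Connected) (a : V) (ha : a ∈ H.verts) :
    ∃ (b : V) (q : G.Walk a b), (∀ x ∈ H.verts, x ∈ q.support) ∧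
      (q.edges.map w).sum ≤ 2 * ∑ e ∈ (Set.toFinite H.edgeSet).toFinset, w e := by
  -- `S` cannot have more elements than `H.verts`, so the count forces `S = H.verts`.
  obtain ⟨S, F, b, q, -, hSH, hFH, -, hSq, hqw, hn⟩ :=
    exists_covering_walk_aux w H hH a ha H.verts.ncard
  have hS : S = H.verts := hn.elim (Set.eq_of_subset_of_ncard_le hSH) id
  subst hS
  refine ⟨b, q, hSq, hqw.trans ?_⟩
  refine mul_le_mul_of_nonneg_left ?_ zero_le_two
  refine Finset.sum_le_sum_of_subset_of_nonneg (fun e he => by simpa using hFH he) ?_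
  intro e he _
  exact hw e (H.edgeSet_subset (by simpa using he))

/-- Here `t` is the last terminal visited before the walk `q`; the term `D s(t, u)` bounds the cost
of getting from `t` to the start `u` of `q`. -/
lemma exists_shortcut_edges {V : Type*} {G : SimpleGraph V} (w D : Sym2 V → ℝ)
    (hD0 : ∀ e, 0 ≤ D e) (hDself : ∀ u, D s(u, u) ≤ 0)
    (hDstep : ∀ t u v, G.Adj u v → D s(t, v) ≤ D s(t, u) + w s(u, v))
    (T : Set V) {u b : V} (q : G.Walk u b) (t : T) :
    ∃ E : Finset (Sym2 T),
      (∀ x : T, x.1 ∈ q.support → (SimpleGraph.fromEdgeSet (E : Set (Sym2 T))).Reachable t x) ∧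
      ∑ e ∈ E, D (e.map Subtype.val) ≤ D s(t.1, u) + (q.edges.map w).sum := by
  classical
  have hreach (E : Finset (Sym2 T)) (x y : T) (h : s(x, y) ∈ E) :
      (SimpleGraph.fromEdgeSet (E : Set (Sym2 T))).Reachable x y := by
    by_cases hxy : x = y
    · rw [hxy]
    · exact SimpleGraph.Adj.reachable ((SimpleGraph.fromEdgeSet_adj _).2 ⟨h, hxy⟩)
  induction q generalizing t with
  | @nil u =>
    by_cases hu : u ∈ T
    · refine ⟨{s(t, ⟨u, hu⟩)}, ?_, by simp⟩
      intro x hx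
      obtain rfl : x = ⟨u, hu⟩ := Subtype.ext (by simpa using hx)
      exact hreach _ _ _ (by simp)
    · refine ⟨∅, ?_, by simpa using hD0 _⟩
      intro x hx
      have hxu : x.1 = u := by simpa using hx
      exact absurd (hxu ▸ x.2) hu
  | @cons u v b h q ih =>
    by_cases hu : u ∈ T
    · obtain ⟨E, hE, hsum⟩ := ih ⟨u, hu⟩
      have htu := hreach (insert s(t, ⟨u, hu⟩) E) t ⟨u, hu⟩ (by simp)
      refine ⟨insert s(t, ⟨u, hu⟩) E, ?_, ?_⟩
      · intro x hx
        rcases List.mem_cons.1 (by simpa using hx : x.1 ∈ u :: q.support) with hx | hx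
        · obtain rfl : x = ⟨u, hu⟩ := Subtype.ext hx
          exact htu
        · exact htu.trans ((hE x hx).mono (SimpleGraph.fromEdgeSet_mono (by simp)))
      · have h1 : ∑ e ∈ insert s(t, ⟨u, hu⟩) E, D (e.map Subtype.val) ≤
            D s(t.1, u) + ∑ e ∈ E, D (e.map Subtype.val) := by
          by_cases hm : s(t, ⟨u, hu⟩) ∈ E
          · rw [Finset.insert_eq_of_mem hm]
            linarith [hD0 s(t.1, u)]
          · rw [Finset.sum_insert hm]
            simp
        have h2 := hDstep u u v h
        have h3 := hDself u
        simp only [SimpleGraph.Walk.edges_cons, List.map_cons, List.sum_cons]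
        simp only at hsum
        linarith
    · obtain ⟨E, hE, hsum⟩ := ih t
      refine ⟨E, ?_, ?_⟩
      · intro x hx
        rcases List.mem_cons.1 (by simpa using hx : x.1 ∈ u :: q.support) with hx | hx
        · exact absurd (hx ▸ x.2) hu
        · exact hE x hx
      · have h2 := hDstep t u v h
        simp only [SimpleGraph.Walk.edges_cons, List.map_cons, List.sum_cons]
        linarith

/-- Let `G` be a finite connected simple graph with nonnegative edge
weights, and for vertices `u, v` let `d(u,v)` denote the minimum total weight of a
walk in `G` from `u` to `v` (here `D : Sym2 V → ℝ`, with `D s(u,v)` the minimum walk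
weight, expressed by `IsLeast`). Let `T` be a nonempty set of terminal vertices of
`G`. Then for every connected subgraph `H` of `G` whose vertex set contains `T`, there
exists a spanning tree of the complete graph on the vertex set `T` (i.e., a connected
acyclic graph on `T`) whose total weight under `d` is at most `2` times the total edge
weight of `H`. -/
theorem spanning_tree_dist_weight_le_two_steiner {V : Type*} [Fintype V]
    (G : SimpleGraph V) (hG : G.Connected)
    (w : Sym2 V → ℝ) (hw : ∀ e ∈ G.edgeSet, 0 ≤ w e)
    (D : Sym2 V → ℝ)
    (hD : ∀ u v : V,
      IsLeast {x : ℝ | ∃ q : G.Walk u v, x = (q.edges.map w).sum} (D s(u, v)))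
    (T : Set V) (hT : T.Nonempty)
    (H : G.Subgraph) (hHconn : H.Connected) (hHT : T ⊆ H.verts) :
    ∃ T' : SimpleGraph T, T'.Connected ∧ T'.IsAcyclic ∧
      ∑ e ∈ (Set.toFinite T'.edgeSet).toFinset, D (e.map Subtype.val) ≤
        2 * ∑ e ∈ (Set.toFinite H.edgeSet).toFinset, w e := by
  classical
  have hD0 : ∀ e, 0 ≤ D e := by
    intro e
    induction e with | _ u v => ?_
    obtain ⟨q, hq⟩ := (hD u v).1
    rw [hq]
    refine List.sum_nonneg fun x hx => ?_
    obtain ⟨e, he, rfl⟩ := List.mem_map.1 hx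
    exact hw e (q.edges_subset_edgeSet he)
  have hDself : ∀ u, D s(u, u) ≤ 0 := fun u => (hD u u).2 ⟨.nil, by simp⟩
  have hDstep : ∀ t u v, G.Adj u v → D s(t, v) ≤ D s(t, u) + w s(u, v) := by
    intro t u v h
    obtain ⟨q, hq⟩ := (hD t u).1
    exact (hD t v).2 ⟨q.concat h, by simp [hq, SimpleGraph.Walk.edges_concat]⟩
  obtain ⟨a, ha⟩ := hT
  obtain ⟨b, q, hq, hqw⟩ := exists_covering_walk w hw H hHconn a (hHT ha)
  obtain ⟨E, hE, hsum⟩ := exists_shortcut_edges w D hD0 hDself hDstep T q ⟨a, ha⟩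
  have hconn : (SimpleGraph.fromEdgeSet (E : Set (Sym2 T))).Connected :=
    SimpleGraph.connected_iff_exists_forall_reachable _ |>.2
      ⟨⟨a, ha⟩, fun x => hE x (hq _ (hHT x.2))⟩
  obtain ⟨T', hle, htree⟩ := hconn.exists_isTree_le
  refine ⟨T', htree.connected, htree.isAcyclic, ?_⟩
  have hsub : (Set.toFinite T'.edgeSet).toFinset ⊆ E := by
    intro e he
    have h := SimpleGraph.edgeSet_mono hle (by simpa using he)
    rw [SimpleGraph.edgeSet_fromEdgeSet] at h
    exact h.1
  have hTE := Finset.sum_le_sum_of_subset_of_nonneg hsub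
    (fun e _ _ => hD0 (e.map Subtype.val))
  have h3 := hDself a
  simp only at hsum
  linarith
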